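/- arXiv:math/0607094 — 6 statements merged into one kernel-verified Lean document; each statement's English description precedes it below -/
import Mathlib

section
/- Let R be a commutative integral domain with identity, let n ≥ 1, and let A be an n×n matrix with entries in R such that every proper principal minor of A equals 1. If det A = 1, then A is conjugate by a permutation matrix to a unipotent upper triangular matrix; that is, there exists a permutation σ of {1,…,n} such that A(σ(i),σ(i)) = 1 for all i and A(σ(i),σ(j)) = 0 whenever j < i. -/
/-!
Suppose that every principal minor of `A` is the product of its diagonal entries, and put an edge
`i ← j` whenever `i ≠ j` and `A i j ≠ 0`. If this digraph had a cycle, take a minimal set `S` of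
vertices whose induced digraph is not acyclic: by minimality that digraph is a single cycle `φ`. The
only permutations contributing to the principal minor on `S` are then the identity and `φ`, so the
minor differs from the product of the diagonal entries by `± ∏ i, A (φ i) i`, which is nonzero in a
domain. Hence the digraph is acyclic, and listing the vertices in a topological order makes `A`
upper triangular.
-/

section

open Function Matrix

variable {V : Type*}

/-- A relation that is not well-founded although all its restrictions to proper subsets are. For the
edge relation of a finite digraph: there is a cycle, but none in a proper induced subdigraph. -/
structure MinimallyIllFounded (r : V → V → Prop) : Prop where
  not_wellFounded : ¬ WellFounded r
  wellFoundedOn : ∀ T : Set V, T ≠ Set.univ → T.WellFoundedOn r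

namespace MinimallyIllFounded

variable {r : V → V → Prop}

theorem eq_univ_of_forall_exists_rel (h : MinimallyIllFounded r) {T : Set V} (hT : T.Nonempty)
    (hpred : ∀ v ∈ T, ∃ u ∈ T, r u v) : T = Set.univ := by
  by_contra hne
  obtain ⟨x, hx⟩ := hT
  obtain ⟨m, -, hm⟩ := WellFounded.has_min (h.wellFoundedOn T hne) Set.univ ⟨⟨x, hx⟩, trivial⟩
  obtain ⟨u, hu, hum⟩ := hpred m m.2
  exact hm ⟨u, hu⟩ trivial hum

theorem nonempty (h : MinimallyIllFounded r) : Nonempty V := by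
  by_contra hV
  rw [not_nonempty_iff] at hV
  exact h.not_wellFounded ⟨isEmptyElim⟩

theorem exists_rel (h : MinimallyIllFounded r) (v : V) : ∃ u, r u v := by
  obtain ⟨T, hT, hpred⟩ : ∃ T : Set V, T.Nonempty ∧ ∀ v ∈ T, ∃ u ∈ T, r u v := by
    simpa [WellFounded.wellFounded_iff_has_min] using h.not_wellFounded
  have hv : v ∈ T := h.eq_univ_of_forall_exists_rel hT hpred ▸ Set.mem_univ v
  exact (hpred v hv).imp fun _ hu ↦ hu.2

theorem surjective_of_forall_rel (h : MinimallyIllFounded r) {f : V → V} (hf : ∀ v, r (f v) v) :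
    Surjective f := by
  have := h.nonempty
  rw [← Set.range_eq_univ]
  exact h.eq_univ_of_forall_exists_rel (Set.range_nonempty f) fun v _ ↦ ⟨f v, ⟨v, rfl⟩, hf v⟩

theorem eq_of_rel_of_rel [Finite V] (h : MinimallyIllFounded r) {u u' v : V} (hu : r u v)
    (hu' : r u' v) : u = u' := by
  classical
  choose f hf using h.exists_rel
  -- Redirecting `f` at `v` must again give a permutation, so it cannot change the value there.
  have eq_of_rel : ∀ {w}, r w v → w = f v := by
    intro w hw
    have hupd : ∀ x, r (update f v w x) x := by
      intro x
      rcases eq_or_ne x v with rfl | hx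
      · simpa using hw
      · simpa [hx] using hf x
    have hinj := Finite.injective_iff_surjective.2 (h.surjective_of_forall_rel hupd)
    obtain ⟨x, rfl⟩ := h.surjective_of_forall_rel hf w
    by_contra hne
    have hx : x ≠ v := fun hx ↦ hne (congrArg f hx)
    exact hx (hinj (by simp [hx]))
  exact (eq_of_rel hu).trans (eq_of_rel hu').symm

theorem exists_isCycle [Finite V] (h : MinimallyIllFounded r) (hirrefl : ∀ v, ¬ r v v) :
    ∃ φ : Equiv.Perm V, φ.IsCycle ∧ ∀ u v, r u v ↔ u = φ v := by
  choose f hf using h.exists_rel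
  let φ : Equiv.Perm V :=
    .ofBijective f (Finite.surjective_iff_bijective.1 (h.surjective_of_forall_rel hf))
  have hφ : ∀ v, r (φ v) v := hf
  obtain ⟨x⟩ := h.nonempty
  have horbit : {y | φ.SameCycle x y} = Set.univ :=
    h.eq_univ_of_forall_exists_rel ⟨x, .refl φ x⟩ fun v hv ↦
      ⟨φ v, Equiv.Perm.sameCycle_apply_right.2 hv, hφ v⟩
  have hx : φ x ≠ x := fun hx ↦ hirrefl x (by simpa only [hx] using hφ x)
  exact ⟨φ, ⟨x, hx, fun y _ ↦ Set.eq_univ_iff_forall.1 horbit y⟩,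
    fun u v ↦ ⟨fun huv ↦ h.eq_of_rel_of_rel huv (hφ v), fun huv ↦ huv ▸ hφ v⟩⟩

end MinimallyIllFounded

theorem exists_finset_minimallyIllFounded [Finite V] {r : V → V → Prop} (h : ¬ WellFounded r) :
    ∃ S : Finset V, MinimallyIllFounded (r on ((↑) : S → V)) := by
  obtain ⟨S, hS⟩ := (Set.toFinite {S : Set V | ¬ S.WellFoundedOn r}).exists_minimal
    ⟨Set.univ, by simpa using h⟩
  lift S to Finset V using S.toFinite
  refine ⟨S, hS.prop, fun T hT ↦ ?_⟩
  rw [← Set.wellFoundedOn_image]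
  by_contra hwf
  have hsub : (S : Set V) ⊆ (↑) '' T := hS.le_of_le hwf (by rintro _ ⟨v, -, rfl⟩; exact v.2)
  refine hT (Set.eq_univ_of_forall fun v ↦ ?_)
  simpa using hsub v.2

theorem exists_equiv_fin_lt_of_wellFounded [Fintype V] {n : ℕ} (hn : Fintype.card V = n)
    {r : V → V → Prop} (hr : WellFounded r) : ∃ e : Fin n ≃ V, ∀ i j, r (e i) (e j) → i < j := by
  classical
  have : IsWellFounded V r := ⟨hr⟩
  obtain ⟨s, hrs, hs⟩ := IsWellFounded.exists_well_order_ge r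
  let _ : LinearOrder V := linearOrderOfSTO s
  let e : Fin n ≃o V := monoEquivOfFin V hn
  exact ⟨e, fun i j hij ↦ e.lt_iff_lt.1 (hrs _ _ hij)⟩

theorem perm_eq_one_or_eq_of_isCycle [Finite V] {φ σ : Equiv.Perm V} (hφ : φ.IsCycle)
    (h : ∀ v, σ v = v ∨ σ v = φ v) : σ = 1 ∨ σ = φ := by
  rw [or_iff_not_imp_left]
  intro hσ
  obtain ⟨x, hx⟩ : ∃ x, σ x ≠ x := by simpa [Equiv.ext_iff] using hσ
  have moved_apply : ∀ v, σ v ≠ v → σ (φ v) ≠ φ v := by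
    intro v hv
    rw [← (h v).resolve_left hv]
    exact σ.injective.ne hv
  have moved_pow : ∀ k : ℕ, σ ((φ ^ k) x) ≠ (φ ^ k) x := by
    intro k
    induction k with
    | zero => simpa using hx
    | succ k ih => simpa only [pow_succ', Equiv.Perm.mul_apply] using moved_apply _ ih
  have hφx : φ x ≠ x := (h x).resolve_left hx ▸ hx
  ext v
  by_cases hv : φ v = v
  · simpa [hv] using h v
  · obtain ⟨k, rfl⟩ := hφ.exists_pow_eq hφx hv
    exact (h _).resolve_left (moved_pow k)

section Matrix

variable {R : Type*} [CommRing R] [DecidableEq V]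

theorem det_eq_prod_diag_add_of_isCycle [Fintype V] {M : Matrix V V R} {φ : Equiv.Perm V}
    (hφ : φ.IsCycle) (hM : ∀ i j, i ≠ j → i ≠ φ j → M i j = 0) :
    M.det = ∏ i, M i i + φ.sign • ∏ i, M (φ i) i := by
  have prod_eq_zero : ∀ σ : Equiv.Perm V, σ ≠ 1 ∧ σ ≠ φ → ∏ i, M (σ i) i = 0 := by
    intro σ hσ
    obtain ⟨v, hv⟩ : ∃ v, ¬ (σ v = v ∨ σ v = φ v) := by
      by_contra! h
      exact not_or.2 hσ (perm_eq_one_or_eq_of_isCycle hφ h)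
    obtain ⟨hv₁, hvφ⟩ := not_or.1 hv
    exact Finset.prod_eq_zero (Finset.mem_univ v) (hM _ _ hv₁ hvφ)
  rw [det_apply, Fintype.sum_eq_add 1 φ hφ.ne_one.symm fun σ hσ ↦ by
    rw [prod_eq_zero σ hσ, smul_zero]]
  simp

/-- The principal minor of `A` indexed by `I`, taken as the determinant of the submatrix whose rows
and columns are indexed by the subtype of elements of `I`. -/
def principalMinor (A : Matrix V V R) (I : Finset V) : R :=
  (A.submatrix ((↑) : I → V) ((↑) : I → V)).det

theorem principalMinor_univ [Fintype V] (A : Matrix V V R) :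
    principalMinor A Finset.univ = A.det :=
  det_submatrix_equiv_self (Equiv.subtypeUnivEquiv Finset.mem_univ) A

theorem principalMinor_singleton (A : Matrix V V R) (i : V) : principalMinor A {i} = A i i :=
  det_unique _

theorem principalMinor_eq_one_of_proper [Fintype V] {A : Matrix V V R}
    (hA : ∀ I, I ≠ Finset.univ → principalMinor A I = 1) (hdet : A.det = 1) (I : Finset V) :
    principalMinor A I = 1 := by
  rcases eq_or_ne I Finset.univ with rfl | hI
  · rw [principalMinor_univ, hdet]
  · exact hA I hI

theorem apply_self_eq_one_of_principalMinor_eq_one {A : Matrix V V R}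
    (hA : ∀ I, principalMinor A I = 1) (i : V) : A i i = 1 := by
  rw [← principalMinor_singleton A, hA]

theorem wellFounded_of_principalMinor_eq_prod_diag [IsDomain R] [Finite V] {A : Matrix V V R}
    (hA : ∀ I, principalMinor A I = ∏ i ∈ I, A i i) :
    WellFounded fun i j ↦ i ≠ j ∧ A i j ≠ 0 := by
  by_contra hwf
  obtain ⟨S, hS⟩ := exists_finset_minimallyIllFounded hwf
  obtain ⟨φ, hφ, hrel⟩ := hS.exists_isCycle fun _ h ↦ h.1 rfl
  have hdet : principalMinor A S = ∏ i : S, A i i + φ.sign • ∏ i : S, A (φ i) i :=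
    det_eq_prod_diag_add_of_isCycle hφ fun i j hij hiφ ↦ by
      by_contra h
      exact hiφ ((hrel i j).1 ⟨Subtype.coe_injective.ne hij, h⟩)
  have hcycle : ∏ i : S, A (φ i) i = 0 := by
    rwa [hA, ← Finset.prod_coe_sort, left_eq_add, smul_eq_zero_iff_eq] at hdet
  exact Finset.prod_ne_zero_iff.2 (fun i _ ↦ ((hrel (φ i) i).2 rfl).2) hcycle

theorem matrix_proper_principal_minors_one_det_one_perm_unipotent_upper_triangular_general
    [IsDomain R] [Fintype V] {n : ℕ} (hn : Fintype.card V = n) (A : Matrix V V R)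
    (hA : ∀ I, principalMinor A I = ∏ i ∈ I, A i i) :
    ∃ e : Fin n ≃ V, (A.submatrix e e).BlockTriangular id := by
  obtain ⟨e, he⟩ :=
    exists_equiv_fin_lt_of_wellFounded hn (wellFounded_of_principalMinor_eq_prod_diag hA)
  refine ⟨e, fun i j hji ↦ ?_⟩
  by_contra hij
  exact lt_asymm hji (he i j ⟨e.injective.ne hji.ne', hij⟩)

end Matrix

end

/-- Let `R` be a commutative integral domain, `n ≥ 1`, and `A` an `n × n`
matrix over `R` all of whose proper principal minors equal `1`. If `det A = 1`, then `A` is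
conjugate by a permutation matrix to a unipotent upper triangular matrix. -/
theorem matrix_proper_principal_minors_one_det_one_perm_unipotent_upper_triangular
    {R : Type*} [CommRing R] [IsDomain R] {n : ℕ} (hn : 1 ≤ n)
    (A : Matrix (Fin n) (Fin n) R)
    (hminors : ∀ I : Finset (Fin n), I ≠ Finset.univ →
      (A.submatrix (fun i : I => (i : Fin n)) (fun i : I => (i : Fin n))).det = 1)
    (hdet : A.det = 1) :
    ∃ σ : Equiv.Perm (Fin n),
      (∀ i : Fin n, A (σ i) (σ i) = 1) ∧
      (∀ i j : Fin n, j < i → A (σ i) (σ j) = 0) := by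
  have hone := principalMinor_eq_one_of_proper hminors hdet
  have hdiag := apply_self_eq_one_of_principalMinor_eq_one hone
  obtain ⟨σ, hσ⟩ :=
    matrix_proper_principal_minors_one_det_one_perm_unipotent_upper_triangular_general
      (Fintype.card_fin n) A fun I ↦ by simp [hone, hdiag]
  exact ⟨σ, fun i ↦ hdiag (σ i), fun _ _ hji ↦ hσ hji⟩
end

section
/- Let R be a commutative integral domain with identity, let n ≥ 2, and let A be an n×n matrix with entries in R such that every proper principal minor of A equals 1. If det A ≠ 1, then A is conjugate by a permutation matrix to a matrix of the following cyclic form: there exists a permutation σ of {1,…,n} such that the matrix B with entries B(i,j) = A(σ(i),σ(j)) satisfies B(i,i) = 1 for all i, B(i,i+1) = b_i ≠ 0 for 1 ≤ i ≤ n−1, B(n,1) = b_n ≠ 0, and B(i,j) = 0 for all other pairs (i,j). -/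
/-!
Regard `A` as a digraph with an arc `i → j` for every nonzero off-diagonal entry. All diagonal
entries are `1`, so `det A ≠ 1` forces a nonzero term of the Leibniz expansion other than the
diagonal one, and hence a closed walk. A shortest closed walk has no chords: it is an induced
directed cycle. The principal minor on its vertices has exactly two nonzero Leibniz terms, so it
equals `1 ± ∏ bᵢ ≠ 1` and cannot be proper. The cycle therefore passes through every index.
-/

open Equiv Function

section Dicycle

/-- Adjacency in the directed cycle on `k + 1` vertices; for `k = 0` this is a loop at `0`.
A closed walk of length `k + 1` in a relation `r` is a homomorphism `DicycleAdj k →r r`, and a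
chordless cycle is an embedding `DicycleAdj k ↪r r`. -/
def DicycleAdj (k : ℕ) (i j : Fin (k + 1)) : Prop :=
  i + 1 = j

variable {α : Type*} {r : α → α → Prop} {k : ℕ}

lemma DicycleAdj.nonempty_relHom_of_chord (f : DicycleAdj k →r r) {i j : Fin (k + 1)}
    (hij : r (f i) (f j)) : Nonempty (DicycleAdj (i - j).val →r r) := by
  -- Start at `j` and stop at `i`; the chord then leads back to the start.
  let g : Fin ((i - j).val + 1) → α := fun u ↦ f (u.castLE (i - j).isLt + j)
  refine ⟨g, ?_⟩
  rintro u _ rfl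
  cases u using Fin.lastCases with
  | last =>
    have g_last : g (Fin.last _) = f i := congrArg f (sub_add_cancel i j)
    have g_zero : g 0 = f j := congrArg f (zero_add j)
    rwa [Fin.last_add_one, g_last, g_zero]
  | cast u =>
    rw [Fin.coeSucc_eq_succ]
    refine f.map_rel ?_
    have castLE_succ : u.castSucc.castLE (i - j).isLt + 1 = u.succ.castLE (i - j).isLt := by
      have hlt : u.val + 1 < k + 1 := u.succ.isLt.trans_le (i - j).isLt
      exact Fin.ext (Fin.val_add_one_of_lt' hlt)
    rw [DicycleAdj, ← castLE_succ]
    abel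

lemma DicycleAdj.exists_nonempty_relEmbedding (f : DicycleAdj k →r r) :
    ∃ m, Nonempty (DicycleAdj m ↪r r) := by
  classical
  have hwalk : ∃ m, Nonempty (DicycleAdj m →r r) := ⟨k, ⟨f⟩⟩
  obtain ⟨g⟩ := Nat.find_spec hwalk
  have adj_of_rel {i j} (hij : r (g i) (g j)) : i + 1 = j := by
    have hlen := Nat.find_min' hwalk (nonempty_relHom_of_chord g hij)
    have hlast : i - j = Fin.last _ := Fin.ext (le_antisymm (i - j).is_le hlen)
    rw [← sub_add_cancel i j, hlast, add_right_comm, Fin.last_add_one, zero_add]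
  -- If `g i = g j`, the arc from `g j` to `g (j + 1)` also leaves `g i`, so `i + 1 = j + 1`.
  have g_injective : Injective g := fun i j hij ↦
    add_right_cancel (adj_of_rel (hij ▸ g.map_rel (rfl : DicycleAdj _ j (j + 1))))
  exact ⟨_, ⟨⟨g, g_injective⟩, ⟨adj_of_rel, g.map_rel⟩⟩⟩

lemma DicycleAdj.exists_nonempty_relHom_of_perm [Finite α] {τ : Perm α} (hτ : τ ≠ 1)
    (hr : ∀ i, τ i ≠ i → r i (τ i)) : ∃ k, Nonempty (DicycleAdj k →r r) := by
  obtain ⟨x, hx : τ x ≠ x⟩ := DFunLike.ne_iff.1 hτ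
  obtain ⟨k, hk⟩ := Nat.exists_eq_add_one.2 (orderOf_pos τ)
  refine ⟨k, ⟨fun t ↦ (τ ^ t.val) x, ?_⟩⟩
  rintro t _ rfl
  have pow_succ_apply : (τ ^ (t + 1).val) x = τ ((τ ^ t.val) x) := by
    rw [← Perm.mul_apply, ← pow_succ', ← pow_mod_orderOf τ (t.val + 1), hk, Fin.val_add,
      Fin.val_one', Nat.add_mod_mod]
  rw [pow_succ_apply]
  exact hr _ ((τ.apply_pow_apply_eq_iff _).not.2 hx)

end Dicycle

section Determinant

variable {ι R : Type*}

lemma eq_one_or_eq_of_isCycle_of_forall_apply [Finite ι] {c τ : Perm ι} (hc : c.IsCycle)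
    (hτc : ∀ i, τ i = i ∨ τ i = c i) : τ = 1 ∨ τ = c := by
  refine or_iff_not_imp_left.2 fun hτ ↦ ?_
  obtain ⟨x, hx : τ x ≠ x⟩ := DFunLike.ne_iff.1 hτ
  have c_ne {y} (hy : τ y ≠ y) : c y ≠ y := (hτc y).resolve_left hy ▸ hy
  have moved_apply {y} (hy : τ y ≠ y) : τ (c y) ≠ c y := fun hcy ↦
    c_ne hy (τ.injective (hcy.trans ((hτc y).resolve_left hy).symm))
  have moved_pow (m : ℕ) : τ ((c ^ m) x) ≠ (c ^ m) x := by
    induction m with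
    | zero => exact hx
    | succ m ih => simpa only [pow_succ', Perm.mul_apply] using moved_apply ih
  ext y
  by_cases hy : c y = y
  · exact (hτc y).elim (·.trans hy.symm) id
  · obtain ⟨m, rfl⟩ := hc.exists_pow_eq (c_ne hx) hy
    exact (hτc _).resolve_left (moved_pow m)

variable [Fintype ι] [DecidableEq ι] [CommRing R]

lemma exists_perm_ne_one_of_det_ne_prod_diag {A : Matrix ι ι R} (hA : A.det ≠ ∏ i, A i i) :
    ∃ τ : Perm ι, τ ≠ 1 ∧ ∀ i, A i (τ i) ≠ 0 := by
  contrapose! hA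
  rw [← Matrix.det_transpose, Matrix.det_apply', Finset.sum_eq_single 1]
  · simp
  · intro τ _ hτ
    obtain ⟨i, hi⟩ := hA τ hτ
    exact mul_eq_zero_of_right _ (Finset.prod_eq_zero (Finset.mem_univ i) hi)
  · simp

lemma det_eq_prod_diag_add_of_isCycle_s1 {B : Matrix ι ι R} {c : Perm ι} (hc : c.IsCycle)
    (hB : ∀ i j, B i j ≠ 0 → j = i ∨ j = c i) :
    B.det = ∏ i, B i i + (Perm.sign c : ℤ) * ∏ i, B i (c i) := by
  rw [← Matrix.det_transpose, Matrix.det_apply', Finset.sum_eq_add 1 c hc.ne_one.symm]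
  · simp
  · rintro τ - ⟨τ_ne_one, τ_ne_c⟩
    obtain ⟨i, hi⟩ : ∃ i, B i (τ i) = 0 := by
      by_contra! hne
      exact (eq_one_or_eq_of_isCycle_of_forall_apply hc fun i ↦ hB i _ (hne i)).elim
        τ_ne_one τ_ne_c
    exact mul_eq_zero_of_right _ (Finset.prod_eq_zero (Finset.mem_univ i) hi)
  · simp
  · simp

end Determinant

section PrincipalMinors

variable {ι κ R : Type*} [CommRing R]

/-- Adjacency in the digraph of a matrix: an arc for every nonzero off-diagonal entry. -/
def OffDiagAdj (A : Matrix ι ι R) (i j : ι) : Prop :=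
  i ≠ j ∧ A i j ≠ 0

lemma det_submatrix_ne_one_of_dicycle [IsDomain R] {A : Matrix ι ι R} (hdiag : ∀ i, A i i = 1)
    {k : ℕ} (f : DicycleAdj k ↪r OffDiagAdj A) : (A.submatrix f f).det ≠ 1 := by
  have arc (i) : OffDiagAdj A (f i) (f (i + 1)) := f.map_rel_iff.2 rfl
  obtain _ | k := k
  · exact absurd rfl (arc 0).1
  have eq_or_eq_succ (i j) (hij : A.submatrix f f i j ≠ 0) : j = i ∨ j = finRotate _ i := by
    rw [finRotate_apply]
    refine or_iff_not_imp_left.2 fun hji ↦ (f.map_rel_iff.1 ⟨?_, hij⟩).symm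
    exact f.injective.ne (Ne.symm hji)
  have prod_ne_zero : ∏ i, A (f i) (f (i + 1)) ≠ 0 :=
    Finset.prod_ne_zero_iff.2 fun i _ ↦ (arc i).2
  rw [det_eq_prod_diag_add_of_isCycle_s1 isCycle_finRotate eq_or_eq_succ]
  simp [hdiag, prod_ne_zero]

variable [Fintype ι] [DecidableEq ι]

/-- Every proper principal minor of `A` equals `1`. Principal submatrices are indexed by the
subtype of a finset `I`; the empty minor is included. -/
def ProperPrincipalMinorsEqOne (A : Matrix ι ι R) : Prop :=
  ∀ I : Finset ι, I ≠ Finset.univ →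
    (A.submatrix (fun i : I ↦ (i : ι)) (fun i : I ↦ (i : ι))).det = 1

variable {A : Matrix ι ι R}

lemma ProperPrincipalMinorsEqOne.det_submatrix_eq_one_of_not_surjective [Fintype κ] [DecidableEq κ]
    (hA : ProperPrincipalMinorsEqOne A) (f : κ ↪ ι) (hf : ¬ Surjective f) :
    (A.submatrix f f).det = 1 := by
  have image_ne_univ : Finset.univ.map f ≠ Finset.univ := fun h ↦ hf fun y ↦ by
    simpa using h.ge (Finset.mem_univ y)
  let e : κ ≃ Finset.univ.map f :=
    (Equiv.subtypeUnivEquiv Finset.mem_univ).symm.trans (Finset.univ.equivMap f)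
  rw [← hA _ image_ne_univ, ← Matrix.det_submatrix_equiv_self e]
  rfl

lemma ProperPrincipalMinorsEqOne.diag_eq_one [Nontrivial ι]
    (hA : ProperPrincipalMinorsEqOne A) (i : ι) : A i i = 1 := by
  simpa using hA.det_submatrix_eq_one_of_not_surjective
    (⟨fun _ ↦ i, injective_of_subsingleton _⟩ : Unit ↪ ι) fun h ↦ by
      obtain ⟨j, hj⟩ := exists_ne i
      obtain ⟨_, hij⟩ := h j
      exact hj hij.symm

lemma ProperPrincipalMinorsEqOne.exists_nonempty_relIso_offDiagAdj [IsDomain R] [Nontrivial ι]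
    (hA : ProperPrincipalMinorsEqOne A) (hdet : A.det ≠ 1) :
    ∃ k, Nonempty (DicycleAdj k ≃r OffDiagAdj A) := by
  have hdiag := hA.diag_eq_one
  obtain ⟨τ, τ_ne_one, hτ⟩ :=
    exists_perm_ne_one_of_det_ne_prod_diag (A := A) (by simpa [hdiag] using hdet)
  obtain ⟨l, ⟨w⟩⟩ := DicycleAdj.exists_nonempty_relHom_of_perm (r := OffDiagAdj A) τ_ne_one
    fun i hi ↦ ⟨hi.symm, hτ i⟩
  obtain ⟨k, ⟨f⟩⟩ := DicycleAdj.exists_nonempty_relEmbedding w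
  have f_surjective : Surjective f := by
    by_contra hf
    exact det_submatrix_ne_one_of_dicycle hdiag f
      (hA.det_submatrix_eq_one_of_not_surjective f.toEmbedding hf)
  exact ⟨k, ⟨RelIso.ofSurjective f f_surjective⟩⟩

end PrincipalMinors

/-- Let `R` be a commutative integral domain, `n ≥ 2`, and `A` an `n × n`
matrix over `R` all of whose proper principal minors equal `1`. If `det A ≠ 1`, then `A` is
conjugate by a permutation matrix to a "cyclic" matrix with `1`s on the diagonal, nonzero
entries `b i` in the positions `(i, i+1)` (indices mod `n`, so including the corner `(n,1)`),
and zeros elsewhere. -/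
theorem matrix_proper_principal_minors_one_det_ne_one_perm_cyclic
    {R : Type*} [CommRing R] [IsDomain R] {n : ℕ} [NeZero n] (hn : 2 ≤ n)
    (A : Matrix (Fin n) (Fin n) R)
    (hminors : ∀ I : Finset (Fin n), I ≠ Finset.univ →
      (A.submatrix (fun i : I => (i : Fin n)) (fun i : I => (i : Fin n))).det = 1)
    (hdet : A.det ≠ 1) :
    ∃ (σ : Equiv.Perm (Fin n)) (b : Fin n → R),
      (∀ i : Fin n, b i ≠ 0) ∧
      (∀ i : Fin n, A (σ i) (σ i) = 1) ∧
      (∀ i : Fin n, A (σ i) (σ (i + 1)) = b i) ∧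
      (∀ i j : Fin n, j ≠ i → j ≠ i + 1 → A (σ i) (σ j) = 0) := by
  have : Nontrivial (Fin n) := Fin.nontrivial_iff_two_le.2 hn
  have hA : ProperPrincipalMinorsEqOne A := hminors
  obtain ⟨k, ⟨f⟩⟩ := hA.exists_nonempty_relIso_offDiagAdj hdet
  obtain rfl : k + 1 = n := by simpa using Fintype.card_congr f.toEquiv
  refine ⟨f.toEquiv, fun i ↦ A (f i) (f (i + 1)), fun i ↦ ?_, fun i ↦ hA.diag_eq_one _,
    fun i ↦ rfl, fun i j hji hj ↦ ?_⟩
  · have arc : OffDiagAdj A (f i) (f (i + 1)) := f.map_rel_iff.2 rfl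
    exact arc.2
  · by_contra hij
    exact hj (f.map_rel_iff.1 ⟨f.injective.ne hji.symm, hij⟩).symm
end

section
/- Let S be a BQ-algebra of rank n over ℤ/2 with degree-one generators x_1,…,x_n. For a subset I ⊆ {1,…,n}, write x_I for the square-free monomial ∏_{i ∈ I} x_i (with x_∅ = 1). Then the 2ⁿ elements x_I, as I ranges over all subsets of {1,…,n}, form a basis of S as a vector space over ℤ/2. In particular, the graded component S_q has dimension equal to the binomial coefficient C(n,q) for every q. -/
/-! Write `x_k² = ℓ_k x_k` with `ℓ_k` in the span of the `x_i`, `i < k`. Rewriting squares in this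
way terminates, so the square-free monomials span. The same rewriting shows that `∏_{i<k} x_i` is
killed by every `x_j` with `j < k`, hence by `ℓ_k`, so replacing factors `x_k` of `∏ x_i` by
`y_k = x_k - ℓ_k` does not change the product. As `x_k y_k = 0`, the complementary monomials
`y_{Jᶜ}` are dual to the `x_I` up to triangularity: `x_J y_{Jᶜ} = ∏ x_i`, while `x_I y_{Jᶜ} = 0`
unless `I ⊆ J`. Hence the `x_I` are linearly independent. -/

open Submodule

theorem linearIndependent_of_triangular {κ R M N : Type*} [PartialOrder κ] [WellFoundedLT κ]
    [Ring R] [AddCommGroup M] [Module R M] [AddCommGroup N] [Module R N]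
    {v : κ → M} (f : κ → M →ₗ[R] N) (hzero : ∀ i j, ¬ i ≤ j → f j (v i) = 0)
    (hdiag : ∀ j (c : R), c • f j (v j) = 0 → c = 0) : LinearIndependent R v := by
  rw [linearIndependent_iff']
  intro s c hc j
  induction j using WellFoundedLT.induction with
  | ind j ih =>
    intro hj
    have hoff : ∀ i ∈ s, i ≠ j → c i • f j (v i) = 0 := by
      intro i hi hij
      by_cases hle : i ≤ j
      · rw [ih i (lt_of_le_of_ne hle hij) hi, zero_smul]
      · rw [hzero i j hle, smul_zero]
    refine hdiag j (c j) ?_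
    calc c j • f j (v j) = ∑ i ∈ s, c i • f j (v i) :=
          (Finset.sum_eq_single_of_mem j hj hoff).symm
      _ = f j (∑ i ∈ s, c i • v i) := by simp only [map_sum, map_smul]
      _ = 0 := by rw [hc, map_zero]

section Graded

variable {κ ι R M : Type*} [DecidableEq κ] [Semiring R] [AddCommMonoid M] [Module R M]
  {v : ι → M} {d : ι → κ}

theorem span_image_degree_eq_of_span_eq_top (𝒜 : κ → Submodule R M) [DirectSum.Decomposition 𝒜]
    (hv : ∀ i, v i ∈ 𝒜 (d i)) (hspan : span R (Set.range v) = ⊤) (q : κ) :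
    span R (v '' {i | d i = q}) = 𝒜 q := by
  apply le_antisymm
  · rw [span_le]
    rintro _ ⟨i, rfl, rfl⟩
    exact hv i
  · intro m hm
    let proj : M →ₗ[R] M :=
      (𝒜 q).subtype ∘ₗ DirectSum.component R κ (𝒜 ·) q ∘ₗ DirectSum.decomposeLinearEquiv 𝒜
    have hproj : span R (Set.range v) ≤ (span R (v '' {i | d i = q})).comap proj := by
      rw [span_le]
      rintro _ ⟨i, rfl⟩
      change (DirectSum.decompose 𝒜 (v i) q : M) ∈ span R (v '' {i | d i = q})
      by_cases hi : d i = q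
      · rw [DirectSum.decompose_of_mem_same 𝒜 (hi ▸ hv i)]
        exact subset_span ⟨i, hi, rfl⟩
      · rw [DirectSum.decompose_of_mem_ne 𝒜 (hv i) hi]
        exact zero_mem _
    have hmem : proj m ∈ span R (v '' {i | d i = q}) := hproj (hspan ▸ mem_top)
    rwa [show proj m = m from DirectSum.decompose_of_mem_same 𝒜 hm] at hmem

theorem finrank_graded_eq_card [StrongRankCondition R] [Nontrivial R]
    (𝒜 : κ → Submodule R M) [DirectSum.Decomposition 𝒜]
    (hv : ∀ i, v i ∈ 𝒜 (d i)) (hli : LinearIndependent R v) (hspan : span R (Set.range v) = ⊤)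
    (q : κ) [Fintype {i // d i = q}] :
    Module.finrank R (𝒜 q) = Fintype.card {i // d i = q} := by
  have hli_q : LinearIndependent R fun i : {i // d i = q} => v i :=
    hli.comp Subtype.val Subtype.val_injective
  rw [← span_image_degree_eq_of_span_eq_top 𝒜 hv hspan q, Set.image_eq_range]
  exact finrank_span_eq_card (ι := {i // d i = q}) hli_q

end Graded

section Products

variable {ι M : Type*} {x : ι → M}

theorem mul_prod_eq_of_sq_eq [CommMonoid M] {I : Finset ι} {i : ι} {l : M}
    (hsq : x i ^ 2 = l * x i) (hi : i ∈ I) : x i * ∏ j ∈ I, x j = l * ∏ j ∈ I, x j := by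
  classical
  rw [← Finset.mul_prod_erase I x hi, ← mul_assoc, ← sq, hsq, mul_assoc]

theorem prod_mul_prod_eq_zero [CommMonoidWithZero M] {y : ι → M} {I K : Finset ι} {i : ι}
    (hI : i ∈ I) (hK : i ∈ K) (h : x i * y i = 0) : (∏ j ∈ I, x j) * ∏ j ∈ K, y j = 0 :=
  zero_dvd_iff.mp (h ▸ mul_dvd_mul (Finset.dvd_prod_of_mem x hI) (Finset.dvd_prod_of_mem y hK))

end Products

theorem mul_mem_of_mem_span {R S : Type*} [CommSemiring R] [Semiring S] [Algebra R S]
    {A : Set S} {N : Submodule R S} {l p : S} (hl : l ∈ span R A) (hA : ∀ a ∈ A, a * p ∈ N) :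
    l * p ∈ N :=
  span_le (p := N.comap (LinearMap.mulRight R p)).mpr hA hl

/-- The coordinate-free form of condition (P1) of a BQ-algebra, over any coefficient ring and any
preordered set of generators: each `x k` satisfies `x k ^ 2 = ℓ * x k` for some linear combination
`ℓ` of the generators with smaller index. -/
def HasTriangularSquares (R : Type*) {ι S : Type*} [Preorder ι] [CommSemiring R] [CommSemiring S]
    [Algebra R S] (x : ι → S) : Prop :=
  ∀ k, ∃ l ∈ span R (x '' Set.Iio k), x k ^ 2 = l * x k

namespace HasTriangularSquares

section Spanning

variable {R ι S : Type*} [CommSemiring R] [CommSemiring S] [Algebra R S] {x : ι → S}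

theorem of_sq_eq_sum [Fintype ι] [Preorder ι] [DecidableLT ι]
    (h : ∀ k, ∃ a : ι → R, x k ^ 2 = ∑ i with i < k, a i • (x i * x k)) :
    HasTriangularSquares R x := by
  intro k
  obtain ⟨a, ha⟩ := h k
  refine ⟨∑ i with i < k, a i • x i, sum_mem fun i hi => smul_mem _ _ (subset_span ?_), ?_⟩
  · exact Set.mem_image_of_mem x (Finset.mem_filter.mp hi).2
  · simp only [ha, Finset.sum_mul, smul_mul_assoc]

variable [Preorder ι] [WellFoundedLT ι]

theorem mul_prod_mem (hx : HasTriangularSquares R x) {I : Finset ι} {N : Submodule R S} (i : ι)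
    (hN : ∀ j ≤ i, j ∉ I → x j * ∏ k ∈ I, x k ∈ N) : x i * ∏ k ∈ I, x k ∈ N := by
  induction i using WellFoundedLT.induction with
  | ind i ih =>
    by_cases hi : i ∈ I
    · obtain ⟨l, hl, hsq⟩ := hx i
      rw [mul_prod_eq_of_sq_eq hsq hi]
      refine mul_mem_of_mem_span hl ?_
      rintro _ ⟨j, hj : j < i, rfl⟩
      exact ih j hj fun k hk => hN k (hk.trans hj.le)
    · exact hN i le_rfl hi

theorem mul_prod_eq_zero_of_isLowerSet (hx : HasTriangularSquares R x) {s : Finset ι}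
    (hs : IsLowerSet (s : Set ι)) {i : ι} (hi : i ∈ s) : x i * ∏ k ∈ s, x k = 0 :=
  (mem_bot R).mp <| hx.mul_prod_mem i fun _ hji hj => absurd (hs hji hi) hj

theorem adjoin_toSubmodule_eq_span_prod (hx : HasTriangularSquares R x) :
    Subalgebra.toSubmodule (Algebra.adjoin R (Set.range x)) =
      span R (Set.range fun I : Finset ι => ∏ i ∈ I, x i) := by
  classical
  apply le_antisymm
  · rw [Algebra.adjoin_eq_span, span_le]
    intro s hs
    induction hs using Submonoid.closure_induction_left with
    | one => exact subset_span ⟨∅, Finset.prod_empty⟩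
    | mul_left y hy m _ hm =>
      obtain ⟨i, rfl⟩ := hy
      rw [mul_comm]
      refine mul_mem_of_mem_span hm ?_
      rintro _ ⟨I, rfl⟩
      rw [mul_comm]
      refine hx.mul_prod_mem i fun j _ hj => subset_span ⟨insert j I, ?_⟩
      exact Finset.prod_insert hj
  · rw [span_le]
    rintro _ ⟨I, rfl⟩
    exact Subalgebra.prod_mem _ fun i _ => Algebra.subset_adjoin (Set.mem_range_self i)

end Spanning

section Independence

variable {R ι S : Type*} [CommRing R] [CommRing S] [Algebra R S] [LinearOrder ι] {x : ι → S}

theorem prod_eq_of_sub_mem_span [WellFoundedLT ι] (hx : HasTriangularSquares R x) {z : ι → S}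
    (hz : ∀ k, x k - z k ∈ span R (x '' Set.Iio k)) {s : Finset ι}
    (hs : IsLowerSet (s : Set ι)) : ∏ k ∈ s, z k = ∏ k ∈ s, x k := by
  induction s using Finset.induction_on_max with
  | empty => rfl
  | insert k s hk ih =>
    have mem_of_lt {i j : ι} (hij : i < j) (hj : j ∈ insert k s) : i ∈ s := by
      have hjk : j ≤ k := (Finset.mem_insert.mp hj).elim le_of_eq fun hj => (hk j hj).le
      exact (Finset.mem_insert.mp (hs hij.le hj)).resolve_left (hij.trans_le hjk).ne
    have hs' : IsLowerSet (s : Set ι) := fun j i hij hj =>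
      hij.eq_or_lt.elim (fun h => h ▸ hj) fun h => mem_of_lt h (Finset.mem_insert_of_mem hj)
    have hkill : (x k - z k) * ∏ i ∈ s, x i = 0 := by
      refine (mem_bot R).mp (mul_mem_of_mem_span (hz k) ?_)
      rintro _ ⟨i, hi, rfl⟩
      exact hx.mul_prod_eq_zero_of_isLowerSet hs' (mem_of_lt hi (Finset.mem_insert_self k s))
    have hks : k ∉ s := fun h => (hk k h).false
    rw [Finset.prod_insert hks, Finset.prod_insert hks, ih hs']
    exact (sub_eq_zero.mp (by rwa [sub_mul] at hkill)).symm

theorem prod_mul_prod_compl_eq [Fintype ι] (hx : HasTriangularSquares R x) {y : ι → S}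
    (hy : ∀ k, x k - y k ∈ span R (x '' Set.Iio k)) (J : Finset ι) :
    (∏ i ∈ J, x i) * ∏ i ∈ Jᶜ, y i = ∏ i, x i := by
  have hz : ∀ k, x k - J.piecewise x y k ∈ span R (x '' Set.Iio k) := by
    intro k
    by_cases hk : k ∈ J
    · rw [J.piecewise_eq_of_mem x y hk, sub_self]
      exact zero_mem _
    · rw [J.piecewise_eq_of_notMem x y hk]
      exact hy k
  rw [← hx.prod_eq_of_sub_mem_span hz (s := Finset.univ) (by simp [isLowerSet_univ]),
    Finset.prod_piecewise, Finset.univ_inter, Finset.compl_eq_univ_sdiff]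

theorem linearIndependent_prod [Fintype ι] (hx : HasTriangularSquares R x)
    (htop : ∀ c : R, c • ∏ i, x i = 0 → c = 0) :
    LinearIndependent R fun I : Finset ι => ∏ i ∈ I, x i := by
  choose l hl hsq using hx
  let y : ι → S := fun k => x k - l k
  have hy : ∀ k, x k - y k ∈ span R (x '' Set.Iio k) := fun k => by
    simpa only [y, sub_sub_cancel] using hl k
  have hxy : ∀ k, x k * y k = 0 := fun k => by
    rw [mul_sub, ← sq, hsq, mul_comm, sub_self]
  refine linearIndependent_of_triangular (fun J => LinearMap.mulRight R (∏ i ∈ Jᶜ, y i))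
    (fun I J hIJ => ?_) fun J c hc => htop c ?_
  · obtain ⟨i, hiI, hiJ⟩ := Finset.not_subset.mp hIJ
    exact prod_mul_prod_eq_zero hiI (Finset.mem_compl.mpr hiJ) (hxy i)
  · rwa [LinearMap.mulRight_apply, prod_mul_prod_compl_eq (fun k => ⟨l k, hl k, hsq k⟩) hy] at hc

end Independence

end HasTriangularSquares

theorem bq_algebra_squarefree_monomials_basis_general
    {R ι S : Type*} [CommRing R] [Nontrivial R] [Fintype ι] [LinearOrder ι]
    [CommRing S] [Algebra R S] (𝒜 : ℕ → Submodule R S) [GradedRing 𝒜] {x : ι → S}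
    (hx1 : ∀ i, x i ∈ 𝒜 1) (hgen : Algebra.adjoin R (Set.range x) = ⊤)
    (hsq : HasTriangularSquares R x) (htop : ∀ c : R, c • ∏ i, x i = 0 → c = 0) :
    (LinearIndependent R (fun I : Finset ι => ∏ i ∈ I, x i) ∧
      span R (Set.range (fun I : Finset ι => ∏ i ∈ I, x i)) = ⊤) ∧
    ∀ q : ℕ, Module.finrank R (𝒜 q) = (Fintype.card ι).choose q := by
  have hli := hsq.linearIndependent_prod htop
  have hspan : span R (Set.range fun I : Finset ι => ∏ i ∈ I, x i) = ⊤ := by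
    rw [← hsq.adjoin_toSubmodule_eq_span_prod, hgen, Algebra.top_toSubmodule]
  have hdeg (I : Finset ι) : ∏ i ∈ I, x i ∈ 𝒜 I.card := by
    simpa only [Finset.sum_const, smul_eq_mul, mul_one] using
      SetLike.prod_mem_graded 𝒜 (fun _ => 1) x (F := I) fun i _ => hx1 i
  refine ⟨⟨hli, hspan⟩, fun q => ?_⟩
  rw [finrank_graded_eq_card 𝒜 hdeg hli hspan q, Fintype.card_finset_len]

/-- Let `S` be a BQ-algebra of rank `n` over `ℤ/2`: a graded commutative
`ℤ/2`-algebra generated by degree-one elements `x_1, …, x_n` such that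
(P1) `x_k² = Σ_{i<k} a_{ik} x_i x_k` for some `a_{ik} ∈ ℤ/2`, and (P2) `x_1 ⋯ x_n ≠ 0`.
Then the `2ⁿ` square-free monomials `x_I = ∏_{i ∈ I} x_i`, for `I ⊆ {1, …, n}`, form a
basis of `S` over `ℤ/2`; in particular `dim S_q = C(n, q)` for every `q`. -/
theorem bq_algebra_squarefree_monomials_basis
    {S : Type*} [CommRing S] [Algebra (ZMod 2) S]
    (𝒜 : ℕ → Submodule (ZMod 2) S) [GradedRing 𝒜]
    {n : ℕ} (x : Fin n → S)
    (hx1 : ∀ i, x i ∈ 𝒜 1)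
    (hgen : Algebra.adjoin (ZMod 2) (Set.range x) = ⊤)
    (hP1 : ∀ k : Fin n, ∃ a : Fin n → ZMod 2,
      x k ^ 2 = ∑ i ∈ Finset.univ.filter (fun i => i < k), a i • (x i * x k))
    (hP2 : ∏ i, x i ≠ 0) :
    (LinearIndependent (ZMod 2) (fun I : Finset (Fin n) => ∏ i ∈ I, x i) ∧
      Submodule.span (ZMod 2)
        (Set.range (fun I : Finset (Fin n) => ∏ i ∈ I, x i)) = ⊤) ∧
    ∀ q : ℕ, Module.finrank (ZMod 2) (𝒜 q) = n.choose q := by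
  simpa only [Fintype.card_fin] using bq_algebra_squarefree_monomials_basis_general 𝒜 hx1 hgen
    (.of_sq_eq_sum hP1) fun c hc => (smul_eq_zero.mp hc).resolve_right hP2
end

section
/- Let S be a BQ-algebra of rank n over ℤ/2 with degree-one generators x_1,…,x_n, let S' be a graded ℤ/2-algebra with S'_{n−1} ≠ 0, and let f : S → S' be a surjective homomorphism of graded ℤ/2-algebras (so f(S_q) ⊆ S'_q for all q). Then the kernel of the induced ℤ/2-linear map f : S_1 → S'_1 has dimension at most one over ℤ/2. -/
/-!
Let `V` be the span of the images `y₁, …, yₙ` of the generators in `S'`. Relation (P1) survives in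
`S'`, so adjoining `yₖ` to the span `Vₖ₋₁` of its predecessors gives a space `Vₖ` with
`Vₖ * Vₖ ≤ Vₖ₋₁ * Vₖ`. Hence `Vₖ ^ (m + 1) ≤ Vₖ₋₁ ^ m * Vₖ`: the exponent at which powers vanish
grows by at most one, and only when the dimension grows, so `V ^ (dim V + 1) = 0`. Since
`S'_q = V ^ q`, a nonzero `S'_q` forces `q ≤ dim V = dim S'₁`, and rank-nullity for the surjection
`S₁ → S'₁` bounds the kernel by `n - q`.
-/

open Submodule

theorem toSubmodule_adjoin_eq_iSup_span_pow {R A : Type*} [CommSemiring R] [Semiring A]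
    [Algebra R A] (s : Set A) :
    Subalgebra.toSubmodule (Algebra.adjoin R s) = ⨆ n : ℕ, span R s ^ n := by
  apply le_antisymm
  · rw [Algebra.adjoin_toSubmodule_le]
    intro a ha
    obtain ⟨n, hn⟩ : ∃ n : ℕ, a ∈ span R s ^ n := by
      induction ha using Submonoid.closure_induction with
      | mem a ha => exact ⟨1, by rw [pow_one]; exact subset_span ha⟩
      | one => exact ⟨0, by rw [pow_zero]; exact Submodule.one_le.mp le_rfl⟩
      | mul a b _ _ iha ihb =>
        obtain ⟨m, hm⟩ := iha
        obtain ⟨n, hn⟩ := ihb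
        exact ⟨m + n, by simpa only [pow_add] using mul_mem_mul hm hn⟩
    exact mem_iSup_of_mem n hn
  · refine iSup_le fun n ↦ ?_
    induction n with
    | zero => simp [Submodule.one_le]
    | succ n ih =>
      rw [pow_succ, mul_le]
      exact fun a ha b hb ↦ mul_mem (S := Subalgebra R A) (ih ha) (Algebra.span_le_adjoin R s hb)

theorem pow_le_graded {R A ι : Type*} [CommSemiring R] [Semiring A] [Algebra R A] [AddMonoid ι]
    (𝒜 : ι → Submodule R A) [SetLike.GradedMonoid 𝒜] {V : Submodule R A} {i : ι} (hV : V ≤ 𝒜 i)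
    (q : ℕ) : V ^ q ≤ 𝒜 (q • i) := by
  induction q with
  | zero => simpa [Submodule.one_le] using SetLike.one_mem_graded 𝒜
  | succ q ih =>
    rw [pow_succ, mul_le, succ_nsmul]
    exact fun a ha b hb ↦ SetLike.mul_mem_graded (ih ha) (hV hb)

theorem span_pow_eq_graded_of_adjoin_eq_top {R A : Type*} [CommRing R] [Ring A] [Algebra R A]
    (𝒜 : ℕ → Submodule R A) [GradedRing 𝒜] {s : Set A} (hs : s ⊆ 𝒜 1)
    (hgen : Algebra.adjoin R s = ⊤) (q : ℕ) : span R s ^ q = 𝒜 q := by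
  have hsup : ⨆ n : ℕ, span R s ^ n = ⊤ := by
    rw [← toSubmodule_adjoin_eq_iSup_span_pow, hgen, Algebra.top_toSubmodule]
  have hind := (DirectSum.Decomposition.isInternal 𝒜).submodule_iSupIndep
  have hle : (fun n ↦ span R s ^ n) ≤ 𝒜 := fun n ↦ by
    simpa only [smul_eq_mul, mul_one] using pow_le_graded 𝒜 (span_le.mpr hs) n
  exact congrFun ((hind.le_iff_eq_of_iSup_eq_top hsup).mp hle) q

theorem map_eq_of_iSup_eq_top_of_iSupIndep {R M N ι : Type*} [Ring R] [AddCommGroup M] [Module R M]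
    [AddCommGroup N] [Module R N] {P : ι → Submodule R M} {Q : ι → Submodule R N}
    (hP : iSup P = ⊤) (hQ : iSupIndep Q) {f : M →ₗ[R] N} (hf : Function.Surjective f)
    (hfPQ : ∀ i, (P i).map f ≤ Q i) (i : ι) : (P i).map f = Q i := by
  have hsup : ⨆ i, (P i).map f = ⊤ := by
    rw [← Submodule.map_iSup, hP, Submodule.map_top, LinearMap.range_eq_top.mpr hf]
  exact congrFun ((hQ.le_iff_eq_of_iSup_eq_top hsup).mp hfPQ) i

theorem finrank_add_finrank_ker_restrict {K V W : Type*} [DivisionRing K] [AddCommGroup V]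
    [Module K V] [AddCommGroup W] [Module K W] {f : V →ₗ[K] W} {p : Submodule K V}
    {q : Submodule K W} [FiniteDimensional K p] (h : ∀ v ∈ p, f v ∈ q) (hpq : p.map f = q) :
    Module.finrank K q + Module.finrank K (LinearMap.ker (f.restrict h)) =
      Module.finrank K p := by
  have hrange : LinearMap.range (f.restrict h) = ⊤ := by
    rw [LinearMap.range_restrict, hpq, comap_subtype_self]
  rw [← LinearMap.finrank_range_add_finrank_ker (f.restrict h), hrange, finrank_top]

theorem pow_succ_le_pow_mul_of_mul_self_le {M : Type*} [Monoid M] [Preorder M] [MulLeftMono M]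
    [MulRightMono M] {v w : M} (h : w * w ≤ v * w) (m : ℕ) : w ^ (m + 1) ≤ v ^ m * w := by
  induction m with
  | zero => simp
  | succ m ih =>
    calc w ^ (m + 1 + 1) = w ^ (m + 1) * w := pow_succ w (m + 1)
      _ ≤ v ^ m * w * w := by gcongr
      _ = v ^ m * (w * w) := mul_assoc _ _ _
      _ ≤ v ^ m * (v * w) := by gcongr
      _ = v ^ (m + 1) * w := by rw [pow_succ, mul_assoc]

theorem sup_mul_sup_le_mul_sup {R A : Type*} [CommSemiring R] [CommSemiring A] [Algebra R A]
    {V L : Submodule R A} (hL : L * L ≤ V * L) : (V ⊔ L) * (V ⊔ L) ≤ V * (V ⊔ L) := by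
  rw [Submodule.sup_mul, Submodule.mul_sup L, mul_comm L V]
  have hVL : V * L ≤ V * (V ⊔ L) := by gcongr; exact le_sup_right
  exact sup_le le_rfl (sup_le hVL (hL.trans hVL))

theorem pow_finrank_succ_eq_bot_of_mul_self_le {K A : Type*} [Field K] [Ring A] [Algebra K A]
    {V W : Submodule K A} [FiniteDimensional K W] (hVW : V ≤ W) (hW : W * W ≤ V * W)
    (hV : V ^ (Module.finrank K V + 1) = ⊥) : W ^ (Module.finrank K W + 1) = ⊥ := by
  rcases hVW.eq_or_lt with rfl | hlt
  · exact hV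
  · have hVpow : V ^ Module.finrank K W = ⊥ := pow_eq_zero_of_le (finrank_lt_finrank_of_lt hlt) hV
    rw [eq_bot_iff]
    calc W ^ (Module.finrank K W + 1) ≤ V ^ Module.finrank K W * W :=
          pow_succ_le_pow_mul_of_mul_self_le hW _
      _ = ⊥ := by rw [hVpow, bot_mul]

/-- Property (P1) of a BQ-algebra without reference to coefficients: the square of each `y k` is a
multiple of `y k` by a linear combination of the `y i` with `i < k`. -/
def IsSquareTriangular (K : Type*) {A ι : Type*} [CommSemiring K] [Semiring A] [Algebra K A]
    [Preorder ι] (y : ι → A) : Prop :=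
  ∀ k, ∃ v ∈ span K (y '' Set.Iio k), y k ^ 2 = v * y k

namespace IsSquareTriangular

theorem of_sq_eq_sum {K A ι : Type*} [CommSemiring K] [Semiring A] [Algebra K A] [Fintype ι]
    [Preorder ι] [DecidableLT ι] {y : ι → A}
    (hy : ∀ k, ∃ a : ι → K, y k ^ 2 = ∑ i with i < k, a i • (y i * y k)) :
    IsSquareTriangular K y := by
  intro k
  obtain ⟨a, ha⟩ := hy k
  refine ⟨∑ i with i < k, a i • y i, sum_mem fun i hi ↦ ?_, ?_⟩
  · exact smul_mem _ _ (subset_span ⟨i, (Finset.mem_filter.mp hi).2, rfl⟩)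
  · simp_rw [ha, Finset.sum_mul, smul_mul_assoc]

theorem map {K A B ι : Type*} [CommSemiring K] [Semiring A] [Algebra K A] [Semiring B]
    [Algebra K B] [Preorder ι] {y : ι → A} (hy : IsSquareTriangular K y) (f : A →ₐ[K] B) :
    IsSquareTriangular K (f ∘ y) := by
  intro k
  obtain ⟨v, hv, hk⟩ := hy k
  refine ⟨f v, ?_, by simp only [Function.comp_apply, ← map_pow, ← map_mul, hk]⟩
  rw [Set.image_comp]
  exact apply_mem_span_image_of_mem_span f.toLinearMap hv

theorem span_image_pow_finrank_succ_eq_bot {K A ι : Type*} [Field K] [CommRing A] [Algebra K A]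
    [LinearOrder ι] {y : ι → A} (hy : IsSquareTriangular K y) (s : Finset ι)
    (hs : IsLowerSet (s : Set ι)) :
    span K (y '' s) ^ (Module.finrank K (span K (y '' s)) + 1) = ⊥ := by
  induction s using Finset.induction_on_max with
  | empty => simp
  | insert k s hks ih =>
    have hIio : Set.Iio k ⊆ s := fun i hi ↦
      Finset.mem_of_mem_insert_of_ne (hs hi.le (Finset.mem_insert_self k s)) hi.ne
    have hs' : IsLowerSet (s : Set ι) := fun i j hji hi ↦ hIio (hji.trans_lt (hks i hi))
    have hspan : span K (y '' ↑(insert k s)) = span K (y '' s) ⊔ span K {y k} := by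
      rw [Finset.coe_insert, Set.image_insert_eq, span_insert, sup_comm]
    have hsq : span K {y k} * span K {y k} ≤ span K (y '' s) * span K {y k} := by
      obtain ⟨v, hv, hk⟩ := hy k
      rw [span_mul_span, Set.singleton_mul_singleton, span_singleton_le_iff_mem, ← pow_two, hk]
      exact mul_mem_mul (span_mono (Set.image_mono hIio) hv) (mem_span_singleton_self _)
    have : FiniteDimensional K (span K (y '' s)) :=
      FiniteDimensional.span_of_finite K (s.finite_toSet.image y)
    rw [hspan]
    exact pow_finrank_succ_eq_bot_of_mul_self_le le_sup_left (sup_mul_sup_le_mul_sup hsq) (ih hs')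

theorem span_range_pow_finrank_succ_eq_bot {K A ι : Type*} [Field K] [CommRing A] [Algebra K A]
    [LinearOrder ι] [Finite ι] {y : ι → A} (hy : IsSquareTriangular K y) :
    span K (Set.range y) ^ (Module.finrank K (span K (Set.range y)) + 1) = ⊥ := by
  have := Fintype.ofFinite ι
  rw [← Set.image_univ, ← Finset.coe_univ]
  exact hy.span_image_pow_finrank_succ_eq_bot Finset.univ (by simp [isLowerSet_univ])

end IsSquareTriangular

theorem bq_algebra_quotient_kernel_dim_le_one_general {K S S' ι : Type*} [Field K]
    [Ring S] [Algebra K S] (𝒜 : ℕ → Submodule K S) [GradedRing 𝒜]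
    [CommRing S'] [Algebra K S'] (ℬ : ℕ → Submodule K S') [GradedRing ℬ]
    [Fintype ι] [LinearOrder ι] (x : ι → S) (hx1 : ∀ i, x i ∈ 𝒜 1)
    (hgen : Algebra.adjoin K (Set.range x) = ⊤) (hP1 : IsSquareTriangular K x)
    (f : S →ₐ[K] S') (hf : Function.Surjective f) (hgr : ∀ q : ℕ, ∀ s ∈ 𝒜 q, f s ∈ ℬ q)
    {q : ℕ} (hq : ℬ q ≠ ⊥) :
    Module.finrank K
      (LinearMap.ker (f.toLinearMap.restrict (p := 𝒜 1) (q := ℬ 1) (hgr 1))) + q ≤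
      Fintype.card ι := by
  have h𝒜 := span_pow_eq_graded_of_adjoin_eq_top 𝒜 (Set.range_subset_iff.mpr hx1) hgen
  have hℬ : ∀ r, (𝒜 r).map f.toLinearMap = ℬ r := map_eq_of_iSup_eq_top_of_iSupIndep
    (DirectSum.Decomposition.isInternal 𝒜).submodule_iSup_eq_top
    (DirectSum.Decomposition.isInternal ℬ).submodule_iSupIndep hf
    (fun r ↦ map_le_iff_le_comap.mpr (hgr r))
  have hpow (r : ℕ) : span K (Set.range (f ∘ x)) ^ r = ℬ r := by
    rw [← hℬ, ← h𝒜, Submodule.map_pow, map_span, Set.range_comp, AlgHom.coe_toLinearMap]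
  have h𝒜1 : span K (Set.range x) = 𝒜 1 := by rw [← h𝒜 1, pow_one]
  have hℬ1 : span K (Set.range (f ∘ x)) = ℬ 1 := by rw [← hpow 1, pow_one]
  have hqℬ : q ≤ Module.finrank K (ℬ 1) := by
    by_contra! hlt
    have hnil := (hP1.map f).span_range_pow_finrank_succ_eq_bot
    rw [hℬ1] at hnil
    exact hq (by rw [← hpow, hℬ1]; exact pow_eq_zero_of_le hlt hnil)
  have hcard : Module.finrank K (𝒜 1) ≤ Fintype.card ι := h𝒜1 ▸ finrank_range_le_card x
  have : FiniteDimensional K (𝒜 1) :=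
    h𝒜1 ▸ FiniteDimensional.span_of_finite K (Set.finite_range x)
  have := finrank_add_finrank_ker_restrict (hgr 1) (hℬ 1)
  omega

/-- Let `S` be a BQ-algebra of rank `n` over `ℤ/2` with degree-one
generators `x_1, …, x_n`, let `S'` be a graded `ℤ/2`-algebra with `S'_{n-1} ≠ 0`, and let
`f : S → S'` be a surjective homomorphism of graded `ℤ/2`-algebras. Then the kernel of the
induced linear map `S_1 → S'_1` has dimension at most one over `ℤ/2`. -/
theorem bq_algebra_quotient_kernel_dim_le_one
    {S : Type*} [CommRing S] [Algebra (ZMod 2) S]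
    (𝒜 : ℕ → Submodule (ZMod 2) S) [GradedRing 𝒜]
    {S' : Type*} [CommRing S'] [Algebra (ZMod 2) S']
    (ℬ : ℕ → Submodule (ZMod 2) S') [GradedRing ℬ]
    {n : ℕ} (x : Fin n → S)
    (hx1 : ∀ i, x i ∈ 𝒜 1)
    (hgen : Algebra.adjoin (ZMod 2) (Set.range x) = ⊤)
    (hP1 : ∀ k : Fin n, ∃ a : Fin n → ZMod 2,
      x k ^ 2 = ∑ i ∈ Finset.univ.filter (fun i => i < k), a i • (x i * x k))
    (hP2 : ∏ i, x i ≠ 0)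
    (f : S →ₐ[ZMod 2] S') (hf : Function.Surjective f)
    (hgr : ∀ q : ℕ, ∀ s ∈ 𝒜 q, f s ∈ ℬ q)
    (hB : ℬ (n - 1) ≠ ⊥) :
    Module.finrank (ZMod 2)
      (LinearMap.ker (f.toLinearMap.restrict (p := 𝒜 1) (q := ℬ 1) (hgr 1))) ≤ 1 := by
  have := bq_algebra_quotient_kernel_dim_le_one_general 𝒜 ℬ x hx1 hgen (.of_sq_eq_sum hP1)
    f hf hgr hB
  rw [Fintype.card_fin] at this
  omega
end

section
/- For an integer m, let R_m denote the commutative ring ℤ[u,v]/(u², v² − m·u·v). Then for integers m and m', the rings R_m and R_{m'} are isomorphic as rings if and only if m ≡ m' (mod 2). -/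
open MvPolynomial

/-- The ring `R_m = ℤ[u,v]/(u², v² − m·u·v)`, the integral cohomology ring of the
Hirzebruch surface `P(ℂ ⊕ γᵐ)`, with `u = X 0` and `v = X 1`. -/
abbrev HirzebruchCohomologyRing (m : ℤ) : Type :=
  MvPolynomial (Fin 2) ℤ ⧸
    Ideal.span ({X 0 ^ 2, X 1 ^ 2 - C m * (X 0 * X 1)} : Set (MvPolynomial (Fin 2) ℤ))

/-!
The substitution `v ↦ v + k u` identifies `R_{m + 2k}` with `R_m`, so only the parity of `m` can
matter. The parity is detected by Frobenius: for even `m`, the relations give `u² = v² = 0` modulo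
2, so any two ring homomorphisms from `R_m` to a ring of characteristic 2 agree after composition
with Frobenius. For odd `m`, the relation `v² = u v` modulo 2 is satisfied with `v² ≠ 0`, so a
homomorphism realising it and the one killing `u` and `v` are still told apart by Frobenius.
-/

namespace HirzebruchCohomologyRing

/-- The generator `u` of `R_m`, the class of `X 0`. -/
noncomputable def u (m : ℤ) : HirzebruchCohomologyRing m := Ideal.Quotient.mk _ (X 0)

/-- The generator `v` of `R_m`, the class of `X 1`. -/
noncomputable def v (m : ℤ) : HirzebruchCohomologyRing m := Ideal.Quotient.mk _ (X 1)

theorem u_sq (m : ℤ) : u m ^ 2 = 0 :=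
  Ideal.Quotient.eq_zero_iff_mem.2 <| Ideal.subset_span <| Set.mem_insert _ _

theorem v_sq (m : ℤ) : v m ^ 2 = m * (u m * v m) := by
  have relation : v m ^ 2 = Ideal.Quotient.mk _ (C m) * (u m * v m) :=
    Ideal.Quotient.eq.2 <| Ideal.subset_span <| Set.mem_insert_of_mem _ rfl
  have mk_C : Ideal.Quotient.mk _ (C m) = (m : HirzebruchCohomologyRing m) :=
    eq_intCast ((Ideal.Quotient.mk _).comp C : ℤ →+* HirzebruchCohomologyRing m) m
  rwa [mk_C] at relation

theorem hom_ext {S : Type*} [Semiring S] {m : ℤ} {f g : HirzebruchCohomologyRing m →+* S}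
    (hu : f (u m) = g (u m)) (hv : f (v m) = g (v m)) : f = g :=
  Ideal.Quotient.ringHom_ext <|
    MvPolynomial.ringHom_ext' (RingHom.ext_int _ _) (Fin.forall_fin_two.2 ⟨hu, hv⟩)

section Lift

variable {S : Type*} [CommRing S] {m : ℤ} (a b : S) (ha : a ^ 2 = 0) (hb : b ^ 2 = m * (a * b))

/-- The universal property of `R_m`: the ring homomorphism sending `u` to `a` and `v` to `b`. -/
noncomputable def lift : HirzebruchCohomologyRing m →+* S :=
  Ideal.Quotient.lift _ (eval₂Hom (Int.castRingHom S) ![a, b]) <| by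
    suffices Ideal.span {X 0 ^ 2, X 1 ^ 2 - C m * (X 0 * X 1)} ≤
        RingHom.ker (eval₂Hom (Int.castRingHom S) ![a, b]) from this
    simp [Ideal.span_le, Set.insert_subset_iff, RingHom.mem_ker, ha, hb, -eq_intCast]

@[simp]
theorem lift_u : lift a b ha hb (u m) = a :=
  (Ideal.Quotient.lift_mk _ _ _).trans (by simp)

@[simp]
theorem lift_v : lift a b ha hb (v m) = b :=
  (Ideal.Quotient.lift_mk _ _ _).trans (by simp)

end Lift

theorem sq_add_mul_eq {S : Type*} [CommRing S] {a b m : S} (ha : a ^ 2 = 0)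
    (hb : b ^ 2 = m * (a * b)) (k : S) :
    (b + k * a) ^ 2 = (m + 2 * k) * (a * (b + k * a)) := by
  linear_combination hb - (m * k + k ^ 2) * ha

/-- The change of generators `u ↦ u`, `v ↦ v + k u`, as an isomorphism `R_{m + 2k} ≃ R_m`. -/
noncomputable def shear (m k : ℤ) :
    HirzebruchCohomologyRing (m + 2 * k) ≃+* HirzebruchCohomologyRing m :=
  RingEquiv.ofRingHom
    (lift (u m) (v m + k * u m) (u_sq m) <| by
      exact_mod_cast sq_add_mul_eq (u_sq m) (v_sq m) k)
    (lift (u (m + 2 * k)) (v (m + 2 * k) + (-k) * u (m + 2 * k)) (u_sq _) <| by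
      have relation := sq_add_mul_eq (u_sq _) (v_sq (m + 2 * k)) (-k)
      push_cast at relation
      linear_combination relation)
    (hom_ext (by simp) (by simp [add_assoc, ← add_mul]))
    (hom_ext (by simp) (by simp [add_assoc, ← add_mul]))

theorem nonempty_ringEquiv_of_modEq {m m' : ℤ} (h : m ≡ m' [ZMOD 2]) :
    Nonempty (HirzebruchCohomologyRing m ≃+* HirzebruchCohomologyRing m') := by
  obtain ⟨k, rfl⟩ := Int.modEq_iff_add_fac.1 h.symm
  exact ⟨shear m' k⟩

theorem frobenius_comp_eq_of_even {m : ℤ} (hm : Even m) {T : Type*} [CommRing T] [CharP T 2]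
    (f g : HirzebruchCohomologyRing m →+* T) :
    (frobenius T 2).comp f = (frobenius T 2).comp g := by
  have map_u_sq (h : HirzebruchCohomologyRing m →+* T) : h (u m) ^ 2 = 0 := by
    rw [← map_pow, u_sq, map_zero]
  have map_v_sq (h : HirzebruchCohomologyRing m →+* T) : h (v m) ^ 2 = 0 := by
    have m_eq_zero : (m : T) = 0 := (CharP.intCast_eq_zero_iff T 2 m).2 hm.two_dvd
    rw [← map_pow, v_sq, map_mul, map_intCast, m_eq_zero, zero_mul]
  exact hom_ext (by simp [frobenius_def, map_u_sq]) (by simp [frobenius_def, map_v_sq])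

/-- The algebra `R[ε, ω]` with `ε² = 0` and `ω² = ε ω`; for `R = 𝔽₂` it is the reduction modulo 2
of `R_m` for odd `m`. It has `1, ε, ω, ε ω` as a basis, so that `ω² ≠ 0`. -/
abbrev OddModel (R : Type*) [CommRing R] : Type _ :=
  QuadraticAlgebra (DualNumber R) 0 DualNumber.eps

namespace OddModel

variable (R : Type*) [CommRing R]

theorem eps_sq : (algebraMap (DualNumber R) (OddModel R) DualNumber.eps) ^ 2 = 0 := by
  rw [← map_pow, DualNumber.eps_pow_two, map_zero]

theorem omega_sq : (QuadraticAlgebra.omega : OddModel R) ^ 2 =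
    algebraMap (DualNumber R) (OddModel R) DualNumber.eps * QuadraticAlgebra.omega := by
  ext <;> simp [sq]

theorem omega_sq_ne_zero [Nontrivial R] : (QuadraticAlgebra.omega : OddModel R) ^ 2 ≠ 0 := by
  intro omega_sq_eq_zero
  have eps_omega_coeff := congrArg (fun t : OddModel R => t.im.snd) omega_sq_eq_zero
  simp [sq] at eps_omega_coeff

instance charP (p : ℕ) [CharP R p] : CharP (OddModel R) p :=
  charP_of_injective_ringHom (f := (algebraMap (DualNumber R) _).comp (algebraMap R _))
    (QuadraticAlgebra.algebraMap_injective.comp TrivSqZeroExt.inl_injective) p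

end OddModel

section Parity

variable (R : Type*) [CommRing R] [CharP R 2] {m : ℤ}

theorem exists_frobenius_comp_ne_of_odd (hm : Odd m) :
    ∃ f g : HirzebruchCohomologyRing m →+* OddModel R,
      (frobenius _ 2).comp f ≠ (frobenius _ 2).comp g := by
  have : Nontrivial R := CharP.nontrivial_of_char_ne_one (OfNat.ofNat_ne_one 2)
  have m_eq_one : (m : OddModel R) = 1 := by
    have h : m ≡ 1 [ZMOD (2 : ℕ)] := Int.odd_iff.1 hm
    simpa using (CharP.intCast_eq_intCast (OddModel R) 2).2 h
  refine ⟨lift _ QuadraticAlgebra.omega (OddModel.eps_sq R) ?_, lift 0 0 (by simp) (by simp), ?_⟩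
  · rw [m_eq_one, one_mul, OddModel.omega_sq]
  · intro h
    apply OddModel.omega_sq_ne_zero R
    simpa [frobenius_def] using RingHom.congr_fun h (v m)

theorem even_iff_frobenius_comp_eq :
    Even m ↔ ∀ f g : HirzebruchCohomologyRing m →+* OddModel R,
      (frobenius _ 2).comp f = (frobenius _ 2).comp g := by
  refine ⟨fun hm => frobenius_comp_eq_of_even hm, fun h => ?_⟩
  by_contra hm
  obtain ⟨f, g, hfg⟩ := exists_frobenius_comp_ne_of_odd R (Int.not_even_iff_odd.1 hm)
  exact hfg (h f g)

end Parity

theorem even_of_ringEquiv {m m' : ℤ}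
    (e : HirzebruchCohomologyRing m ≃+* HirzebruchCohomologyRing m') (hm : Even m) : Even m' := by
  refine (even_iff_frobenius_comp_eq (ZMod 2)).2 fun f g => ?_
  rw [← RingHom.cancel_right (f := e.toRingHom) e.surjective]
  exact (even_iff_frobenius_comp_eq (ZMod 2)).1 hm (f.comp e.toRingHom) (g.comp e.toRingHom)

theorem even_iff_even_of_ringEquiv {m m' : ℤ}
    (e : HirzebruchCohomologyRing m ≃+* HirzebruchCohomologyRing m') : Even m ↔ Even m' :=
  ⟨even_of_ringEquiv e, even_of_ringEquiv e.symm⟩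

end HirzebruchCohomologyRing

/-- For integers `m` and `m'`, the rings
`R_m = ℤ[u,v]/(u², v² − m·u·v)` and `R_{m'}` are isomorphic as rings if and only if
`m ≡ m' (mod 2)`. -/
theorem hirzebruchCohomologyRing_iso_iff_mod_two (m m' : ℤ) :
    Nonempty (HirzebruchCohomologyRing m ≃+* HirzebruchCohomologyRing m') ↔
      m ≡ m' [ZMOD 2] := by
  refine ⟨?_, HirzebruchCohomologyRing.nonempty_ringEquiv_of_modEq⟩
  rintro ⟨e⟩
  have same_parity : Even m ↔ Even m' := HirzebruchCohomologyRing.even_iff_even_of_ringEquiv e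
  exact Int.modEq_iff_dvd.2 (even_iff_two_dvd.1 (Int.even_sub.2 same_parity.symm))
end

section
/- Let n ≥ 2 and let b_1,…,b_n be integers with b_1 b_2 ⋯ b_n = (−1)ⁿ · 2. Suppose a_1,…,a_n are rational numbers satisfying the cyclic system of equations a_i² · b_i = 2 · a_i · a_{i+1} for 1 ≤ i ≤ n−1, together with a_n² · b_n = 2 · a_n · a_1. Then a_i = 0 for every i. -/
/-!
If some `a i` is nonzero, cancelling it from its equation leaves `a i * b i = 2 * a (i + 1)`, so
`a (i + 1)` is nonzero too and, going round the cycle, all the `a i` are. Multiplying the cancelled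
equations together, the product of the `a i` drops out and `∏ i, b i = 2 ^ n`. This differs from
`(-1) ^ n * 2`: by its sign if `n` is odd, and because `n ≠ 1` if `n` is even.
-/

theorem neg_one_pow_mul_ne_pow {R : Type*} [Ring R] [LinearOrder R] [IsStrictOrderedRing R]
    {x : R} (hx : 1 < x) (n : ℕ) : (-1) ^ n * x ≠ x ^ n := by
  intro h
  have hx_pos : 0 < x := zero_lt_one.trans hx
  rcases n.even_or_odd with hn | hn
  · rw [hn.neg_one_pow, one_mul] at h
    have hn_one : 1 = n := pow_right_injective₀ hx_pos hx.ne' ((pow_one x).trans h)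
    exact Nat.not_even_one (hn_one ▸ hn)
  · rw [hn.neg_one_pow, neg_one_mul] at h
    exact ((neg_neg_of_pos hx_pos).trans (pow_pos hx_pos n)).ne h

theorem sameCycle_addRight_one {n : ℕ} [NeZero n] (i j : Fin n) :
    (Equiv.addRight (1 : Fin n)).SameCycle i j := by
  refine ⟨((j - i : Fin n) : ℕ), ?_⟩
  open Fin.CommRing in
  rw [zpow_natCast, ← Equiv.Perm.iterate_eq_pow, Equiv.coe_addRight, add_right_iterate_apply,
    nsmul_one, Fin.cast_val_eq_self, add_sub_cancel]

section Perm

variable {ι : Type*} {σ : Equiv.Perm ι}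

theorem of_sameCycle_of_forall_imp_apply [Finite ι] {p : ι → Prop}
    (hp : ∀ k, p k → p (σ k)) {i j : ι} (hij : σ.SameCycle i j) (hi : p i) : p j := by
  obtain ⟨k, rfl⟩ := hij.exists_nat_pow_eq
  rw [← Equiv.Perm.iterate_eq_pow]
  exact Function.Iterate.rec p hi hp k

variable {M : Type*} [CommMonoidWithZero M] [IsCancelMulZero M]

theorem mul_eq_mul_of_sq_mul_eq {x y b c : M} (hx : x ≠ 0) (h : x ^ 2 * b = c * x * y) :
    x * b = c * y := by
  apply mul_left_cancel₀ hx
  rw [← mul_assoc, ← sq, h, mul_comm c, mul_assoc]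

variable [Fintype ι] {a b : ι → M} {c : M}

theorem prod_eq_pow_card_of_mul_eq_mul_perm (ha : ∀ i, a i ≠ 0)
    (h : ∀ i, a i * b i = c * a (σ i)) : ∏ i, b i = c ^ Fintype.card ι := by
  obtain _ | _ := subsingleton_or_nontrivial M
  · exact Subsingleton.elim _ _
  apply mul_left_cancel₀ (Finset.prod_ne_zero_iff.mpr fun i _ ↦ ha i)
  calc (∏ i, a i) * ∏ i, b i = ∏ i, c * a (σ i) := by simp only [← Finset.prod_mul_distrib, h]
    _ = c ^ Fintype.card ι * ∏ i, a i := by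
      rw [Finset.prod_mul_distrib, Equiv.prod_comp, Finset.prod_const, Finset.card_univ]
    _ = (∏ i, a i) * c ^ Fintype.card ι := mul_comm _ _

theorem cyclic_system_only_trivial_solution_general (hσ : ∀ i j, σ.SameCycle i j)
    (hb : ∏ i, b i ≠ 0) (hbc : ∏ i, b i ≠ c ^ Fintype.card ι)
    (ha : ∀ i, a i ^ 2 * b i = c * a i * a (σ i)) (i : ι) : a i = 0 := by
  by_contra hi
  have hb_ne (k : ι) : b k ≠ 0 := fun hk ↦ hb (Finset.prod_eq_zero (Finset.mem_univ k) hk)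
  have h_cancel (k : ι) (hk : a k ≠ 0) : a k * b k = c * a (σ k) :=
    mul_eq_mul_of_sq_mul_eq hk (ha k)
  have h_next (k : ι) (hk : a k ≠ 0) : a (σ k) ≠ 0 :=
    right_ne_zero_of_mul (h_cancel k hk ▸ mul_ne_zero hk (hb_ne k))
  have ha_ne (j : ι) : a j ≠ 0 := of_sameCycle_of_forall_imp_apply h_next (hσ i j) hi
  exact hbc (prod_eq_pow_card_of_mul_eq_mul_perm ha_ne fun k ↦ h_cancel k (ha_ne k))

end Perm

/-- Let `n ≥ 2` and let `b_1, …, b_n` be integers with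
`b_1 b_2 ⋯ b_n = (−1)ⁿ · 2`. If rational numbers `a_1, …, a_n` satisfy the cyclic system
`a_i² · b_i = 2 · a_i · a_{i+1}` (indices mod `n`), then every `a_i = 0`. -/
theorem cyclic_system_only_trivial_solution {n : ℕ} [NeZero n] (hn : 2 ≤ n)
    (b : Fin n → ℤ) (hb : ∏ i, b i = (-1) ^ n * 2)
    (a : Fin n → ℚ) (ha : ∀ i : Fin n, a i ^ 2 * (b i : ℚ) = 2 * a i * a (i + 1)) :
    ∀ i, a i = 0 := by
  have hb_rat : ∏ i, (b i : ℚ) = (-1) ^ n * 2 := mod_cast hb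
  apply cyclic_system_only_trivial_solution_general sameCycle_addRight_one _ _ ha
  · simp [hb_rat]
  · simpa [hb_rat] using neg_one_pow_mul_ne_pow one_lt_two n
end
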